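/- Let p > 1 and a, b, L > 0. There exists u ∈ C¹[0,L] with u(0) = u(L) = 0 and ∫₀^L |u(t)|^p dt = 1 such that ∫₀^L a^p [(u'(t))⁺]^p + b^p [(u'(t))⁻]^p dt = λ^{a,b}_{1,p}(0,L), and this minimizer u is a weak solution of −Δ^{a,b}_p u = λ^{a,b}_{1,p}(0,L) |u|^{p−2} u on (0,L). -/

import Mathlib

open Set

/-- `u` is C¹ on `[α, γ]` with derivative `u'` there. -/
def C1On (α γ : ℝ) (u u' : ℝ → ℝ) : Prop :=
  (∀ t ∈ Set.Icc α γ, HasDerivWithinAt u (u' t) (Set.Icc α γ) t) ∧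
  ContinuousOn u' (Set.Icc α γ)

/-- Admissible functions on `[0, L]`: C¹ with zero boundary values. -/
def Adm (L : ℝ) (u u' : ℝ → ℝ) : Prop :=
  C1On 0 L u u' ∧ u 0 = 0 ∧ u L = 0

/-- The asymmetric energy integrand `a^p (s⁺)^p + b^p (s⁻)^p`. -/
noncomputable def asymE (p a b s : ℝ) : ℝ :=
  a ^ p * (max s 0) ^ p + b ^ p * (max (-s) 0) ^ p

/-- The asymmetric flux `a^p (s⁺)^(p-1) - b^p (s⁻)^(p-1)`. -/
noncomputable def asymFlux (p a b s : ℝ) : ℝ :=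
  a ^ p * (max s 0) ^ (p - 1) - b ^ p * (max (-s) 0) ^ (p - 1)

/-- The first Dirichlet eigenvalue `λ^{a,b}_{1,p}(0,L)`, as the infimum of the
asymmetric energy over normalized admissible functions. -/
noncomputable def lam1 (p a b L : ℝ) : ℝ :=
  sInf { E : ℝ | ∃ u u' : ℝ → ℝ, Adm L u u' ∧
    (∫ t in (0:ℝ)..L, |u t| ^ p) = 1 ∧
    E = ∫ t in (0:ℝ)..L, asymE p a b (u' t) }

/-- `u` (a C¹ function on `[0,L]` with derivative `u'` and zero boundary values)
is a weak solution of `-Δ^{a,b}_p u = g` on `(0,L)`. -/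
def IsWeakSol (p a b L : ℝ) (u u' g : ℝ → ℝ) : Prop :=
  Adm L u u' ∧
  ∀ φ φ' : ℝ → ℝ, Adm L φ φ' →
    (∫ t in (0:ℝ)..L, asymFlux p a b (u' t) * φ' t) =
      ∫ t in (0:ℝ)..L, g t * φ t

/-!
A positive solution `u` of the Euler-Lagrange equation with eigenvalue `λ` is a minimizer as soon as
`λ ∫ |v| ^ p ≤ ∫ asymE v'` for every admissible `v`, because testing the equation with `u` itself
gives equality for `v = u`.

Such a `u` exists because the equation is the unweighted `p`-Laplace equation wherever `u'` has a
constant sign, with `a` or `b` absorbed by rescaling time: rescale the rising quarter wave of the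
generalized sine by `a`, and its mirror image by `b`, and join the two at their common maximum.

The inequality is Picone's. Let `J` be the flux of `u` and `q = v⁺ / u`. The field `J u q ^ p`
vanishes at both ends, and its derivative is the tangent line of `asymE` at `q u'`, evaluated at
`v'`, minus `λ (v⁺) ^ p`. Convexity bounds the tangent line by `asymE v'`. The part `v⁻` is treated
alike, with the reflected eigenfunction `u (L - t)`, which solves the equation with `a` and `b`
exchanged.
-/

open Filter MeasureTheory Topology

section PositivePart

lemma hasDerivAt_max_zero_rpow {p : ℝ} (hp : 1 < p) (s : ℝ) :
    HasDerivAt (fun x : ℝ => max x 0 ^ p) (p * max s 0 ^ (p - 1)) s := by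
  have off_zero : ∀ y : ℝ, y ≠ 0 →
      HasDerivAt (fun x : ℝ => max x 0 ^ p) (p * max y 0 ^ (p - 1)) y := by
    intro y hy
    rcases lt_or_gt_of_ne hy with hneg | hpos
    · rw [max_eq_right hneg.le, Real.zero_rpow (by linarith), mul_zero]
      refine (hasDerivAt_const y (0 : ℝ)).congr_of_eventuallyEq ?_
      filter_upwards [Iio_mem_nhds hneg] with z hz
      rw [max_eq_right hz.le, Real.zero_rpow (by linarith)]
    · rw [max_eq_left hpos.le]
      refine (Real.hasDerivAt_rpow_const (Or.inl hpos.ne')).congr_of_eventuallyEq ?_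
      filter_upwards [Ioi_mem_nhds hpos] with z hz
      rw [max_eq_left hz.le]
  rcases eq_or_ne s 0 with rfl | hs
  · refine hasDerivAt_of_hasDerivAt_of_ne off_zero ?_ ?_
    · exact ((continuous_id.max continuous_const).rpow_const
        fun _ => Or.inr (by linarith)).continuousAt
    · exact (continuous_const.mul ((continuous_id.max continuous_const).rpow_const
        fun _ => Or.inr (by linarith))).continuousAt
  · exact off_zero s hs

lemma rpow_sub_one_mul_self {p s : ℝ} (hp : p ≠ 0) (hs : 0 ≤ s) : s ^ (p - 1) * s = s ^ p := by
  rw [← Real.rpow_add_one' hs (by simpa using hp), sub_add_cancel]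

lemma max_zero_rpow_sub_one_mul {p : ℝ} (hp : 1 < p) (s : ℝ) :
    max s 0 ^ (p - 1) * s = max s 0 ^ p := by
  rcases le_total 0 s with hs | hs
  · rw [max_eq_left hs, rpow_sub_one_mul_self (by linarith) hs]
  · rw [max_eq_right hs, Real.zero_rpow (by linarith), Real.zero_rpow (by linarith), zero_mul]

lemma abs_rpow_eq_max_add_max {p : ℝ} (hp : p ≠ 0) (s : ℝ) :
    |s| ^ p = max s 0 ^ p + max (-s) 0 ^ p := by
  rcases le_total 0 s with hs | hs
  · simp [abs_of_nonneg hs, hs, Real.zero_rpow hp]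
  · simp [abs_of_nonpos hs, hs, Real.zero_rpow hp]

end PositivePart

section EnergyAndFlux

variable {p a b : ℝ}

lemma continuous_asymFlux (hp : 1 ≤ p) (a b : ℝ) : Continuous (asymFlux p a b) := by
  unfold asymFlux
  have hp' : 0 ≤ p - 1 := by linarith
  exact (continuous_const.mul ((continuous_id.max continuous_const).rpow_const
    fun _ => Or.inr hp')).sub (continuous_const.mul ((continuous_neg.max
      continuous_const).rpow_const fun _ => Or.inr hp'))

lemma continuous_asymE (hp : 0 ≤ p) (a b : ℝ) : Continuous (asymE p a b) := by
  unfold asymE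
  exact (continuous_const.mul ((continuous_id.max continuous_const).rpow_const
    fun _ => Or.inr hp)).add (continuous_const.mul ((continuous_neg.max
      continuous_const).rpow_const fun _ => Or.inr hp))

lemma asymFlux_of_nonneg (hp : p ≠ 1) (a b : ℝ) {s : ℝ} (hs : 0 ≤ s) :
    asymFlux p a b s = a ^ p * s ^ (p - 1) := by
  simp [asymFlux, hs, Real.zero_rpow (sub_ne_zero.2 hp)]

lemma asymE_of_nonneg (hp : p ≠ 0) (a b : ℝ) {s : ℝ} (hs : 0 ≤ s) :
    asymE p a b s = a ^ p * s ^ p := by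
  simp [asymE, hs, Real.zero_rpow hp]

lemma asymFlux_neg (p a b s : ℝ) : asymFlux p a b (-s) = -asymFlux p b a s := by
  unfold asymFlux
  rw [neg_neg]
  ring

lemma asymE_neg (p a b s : ℝ) : asymE p a b (-s) = asymE p b a s := by
  unfold asymE
  rw [neg_neg, add_comm]

lemma asymFlux_mul (p a b : ℝ) {r : ℝ} (hr : 0 ≤ r) (s : ℝ) :
    asymFlux p a b (r * s) = r ^ (p - 1) * asymFlux p a b s := by
  have max_mul : ∀ x, max (r * x) 0 ^ (p - 1) = r ^ (p - 1) * max x 0 ^ (p - 1) := fun x => by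
    rw [← Real.mul_rpow hr (le_max_right x 0), mul_max_of_nonneg _ _ hr, mul_zero]
  simp only [asymFlux, ← mul_neg, max_mul]
  ring

lemma asymFlux_mul_self (hp : 1 < p) (a b s : ℝ) : asymFlux p a b s * s = asymE p a b s := by
  rw [asymFlux, asymE, ← max_zero_rpow_sub_one_mul hp s, ← max_zero_rpow_sub_one_mul hp (-s)]
  ring

lemma asymE_nonneg (p : ℝ) (ha : 0 ≤ a) (hb : 0 ≤ b) (s : ℝ) : 0 ≤ asymE p a b s := by
  unfold asymE
  have := le_max_right s 0
  have := le_max_right (-s) 0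
  positivity

lemma rpow_tangent_le {x y : ℝ} (hp : 1 < p) (hx : 0 ≤ x) (hy : 0 ≤ y) :
    p * y ^ (p - 1) * x - (p - 1) * y ^ p ≤ x ^ p := by
  have hp0 : 0 < p := by linarith
  have hp1 : p - 1 ≠ 0 := by linarith
  have young := Real.young_inequality_of_nonneg hx (Real.rpow_nonneg hy (p - 1))
    (Real.HolderConjugate.conjExponent hp)
  rw [Real.conjExponent, ← Real.rpow_mul hy, mul_div_cancel₀ _ hp1] at young
  have scaled := mul_le_mul_of_nonneg_left young hp0.le
  have expand : p * (x ^ p / p + y ^ p / (p / (p - 1))) = x ^ p + (p - 1) * y ^ p := by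
    field_simp
  linarith

-- The left side is the tangent line at `y` of the convex function `asymE`, whose derivative is
-- `p * asymFlux`.
lemma asymE_tangent_le (hp : 1 < p) (ha : 0 ≤ a) (hb : 0 ≤ b) (x y : ℝ) :
    p * asymFlux p a b y * x - (p - 1) * asymE p a b y ≤ asymE p a b x := by
  have of_nonneg : ∀ {a b x y : ℝ}, 0 ≤ a → 0 ≤ b → 0 ≤ y →
      p * asymFlux p a b y * x - (p - 1) * asymE p a b y ≤ asymE p a b x := by
    intro a b x y ha hb hy
    have hap : 0 ≤ a ^ p := Real.rpow_nonneg ha p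
    rw [asymFlux_of_nonneg hp.ne' _ _ hy, asymE_of_nonneg (by linarith) _ _ hy]
    rcases le_total 0 x with hx | hx
    · rw [asymE_of_nonneg (by linarith) _ _ hx]
      linarith [mul_le_mul_of_nonneg_left (rpow_tangent_le hp hx hy) hap]
    · have slope_nonneg : 0 ≤ p * (a ^ p * y ^ (p - 1)) := by positivity
      have energy_nonneg : 0 ≤ (p - 1) * (a ^ p * y ^ p) :=
        mul_nonneg (by linarith) (by positivity)
      linarith [mul_nonpos_of_nonneg_of_nonpos slope_nonneg hx, asymE_nonneg p ha hb x]
  rcases le_total 0 y with hy | hy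
  · exact of_nonneg ha hb hy
  · have reflected := of_nonneg hb ha (x := -x) (neg_nonneg.2 hy)
    rw [asymFlux_neg, asymE_neg, asymE_neg] at reflected
    linarith

end EnergyAndFlux

section C1On

variable {α β γ : ℝ} {f f' g g' : ℝ → ℝ}

lemma C1On.continuousOn (h : C1On α γ f f') : ContinuousOn f (Icc α γ) :=
  fun t ht => (h.1 t ht).continuousWithinAt

lemma C1On.hasDerivAt (h : C1On α γ f f') {t : ℝ} (ht : t ∈ Ioo α γ) : HasDerivAt f (f' t) t :=
  (h.1 t (Ioo_subset_Icc_self ht)).hasDerivAt (Icc_mem_nhds ht.1 ht.2)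

lemma C1On.neg (h : C1On α γ f f') : C1On α γ (fun t => -f t) fun t => -f' t :=
  ⟨fun t ht => (h.1 t ht).neg, h.2.neg⟩

lemma Adm.neg (h : Adm γ f f') : Adm γ (fun t => -f t) fun t => -f' t :=
  ⟨h.1.neg, neg_eq_zero.2 h.2.1, neg_eq_zero.2 h.2.2⟩

lemma C1On.const_mul (h : C1On α γ f f') (c : ℝ) :
    C1On α γ (fun t => c * f t) fun t => c * f' t :=
  ⟨fun t ht => (h.1 t ht).const_mul c, continuousOn_const.mul h.2⟩

lemma C1On.congr (h : C1On α γ f f') (hg : EqOn g f (Icc α γ)) (hg' : EqOn g' f' (Icc α γ)) :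
    C1On α γ g g' :=
  ⟨fun t ht => hg' ht ▸ (h.1 t ht).congr hg (hg ht), h.2.congr hg'⟩

lemma C1On.comp_const_sub (h : C1On α γ f f') (c : ℝ) :
    C1On (c - γ) (c - α) (fun t => f (c - t)) fun t => -f' (c - t) := by
  have maps : MapsTo (fun t => c - t) (Icc (c - γ) (c - α)) (Icc α γ) :=
    fun t ht => ⟨by linarith [ht.2], by linarith [ht.1]⟩
  refine ⟨fun t ht => ?_, (h.2.comp (by fun_prop) maps).neg⟩
  have chain := (h.1 _ (maps ht)).comp t ((hasDerivWithinAt_id t _).const_sub c) maps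
  rw [mul_neg_one] at chain
  exact chain

lemma C1On.comp_div (h : C1On α γ f f') {r : ℝ} (hr : 0 < r) :
    C1On (α * r) (γ * r) (fun t => f (t / r)) fun t => f' (t / r) / r := by
  have maps : MapsTo (fun t => t / r) (Icc (α * r) (γ * r)) (Icc α γ) :=
    fun t ht => ⟨(le_div_iff₀ hr).2 ht.1, (div_le_iff₀ hr).2 ht.2⟩
  refine ⟨fun t ht => ?_, (h.2.comp (by fun_prop) maps).div_const r⟩
  have chain := (h.1 _ (maps ht)).comp t ((hasDerivWithinAt_id t _).div_const r) maps
  rw [mul_one_div] at chain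
  exact chain

lemma C1On.trans (hαβ : α ≤ β) (hβγ : β ≤ γ) (hl : C1On α β f f') (hr : C1On β γ f f') :
    C1On α γ f f' := by
  have hasDeriv_of_closed : ∀ {x y t : ℝ}, C1On x y f f' →
      HasDerivWithinAt f (f' t) (Icc x y) t := by
    intro x y t h
    by_cases ht : t ∈ Icc x y
    · exact h.1 t ht
    · exact HasFDerivWithinAt.of_notMem_closure (by rwa [isClosed_Icc.closure_eq])
  rw [C1On, ← Icc_union_Icc_eq_Icc hαβ hβγ]
  exact ⟨fun t _ => (hasDeriv_of_closed hl).union (hasDeriv_of_closed hr),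
    hl.2.union_of_isClosed hr.2 isClosed_Icc isClosed_Icc⟩

lemma c1On_of_hasDerivAt_Ioo (hαγ : α ≠ γ) (hf : ContinuousOn f (Icc α γ))
    (hf' : ContinuousOn f' (Icc α γ)) (h : ∀ t ∈ Ioo α γ, HasDerivAt f (f' t) t) :
    C1On α γ f f' := by
  refine ⟨fun t ht => ?_, hf'⟩
  rw [hasDerivWithinAt_iff_hasFDerivWithinAt, ← closure_Ioo hαγ]
  refine hasFDerivWithinAt_closure_of_tendsto_fderiv
    (fun x hx => (h x hx).differentiableAt.differentiableWithinAt) (convex_Ioo α γ) isOpen_Ioo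
    (fun x hx => (hf x (closure_Ioo hαγ ▸ hx)).mono Ioo_subset_Icc_self) ?_
  have lim : Tendsto f' (𝓝[Ioo α γ] t) (𝓝 (f' t)) := (hf' t ht).mono Ioo_subset_Icc_self
  refine (((ContinuousLinearMap.toSpanSingletonCLE (𝕜 := ℝ) (E := ℝ)).continuous.tendsto _).comp
    lim).congr' ?_
  filter_upwards [self_mem_nhdsWithin] with x hx using (h x hx).hasFDerivAt.fderiv.symm

end C1On

section EigenODE

variable {p a b lam α β γ : ℝ} {u u' v v' : ℝ → ℝ}

/-- `u` is a classical solution on `[α, γ]` of the eigenvalue equation: the flux of `u'` is C¹ with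
derivative `-lam * u ^ (p - 1)`. This is the paper's `-lam * |u| ^ (p - 2) * u` only where `u` is
nonnegative. -/
structure EigenODEOn (p a b lam α γ : ℝ) (u u' : ℝ → ℝ) : Prop where
  c1On : C1On α γ u u'
  c1On_flux : C1On α γ (fun t => asymFlux p a b (u' t)) fun t => -(lam * u t ^ (p - 1))

lemma EigenODEOn.congr (h : EigenODEOn p a b lam α γ u u') (hv : EqOn v u (Icc α γ))
    (hv' : EqOn v' u' (Icc α γ)) : EigenODEOn p a b lam α γ v v' where
  c1On := h.c1On.congr hv hv'
  c1On_flux := h.c1On_flux.congr (fun t ht => by simp only [hv' ht]) fun t ht => by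
    simp only [hv ht]

lemma EigenODEOn.trans (hαβ : α ≤ β) (hβγ : β ≤ γ) (hl : EigenODEOn p a b lam α β u u')
    (hr : EigenODEOn p a b lam β γ u u') : EigenODEOn p a b lam α γ u u' where
  c1On := hl.c1On.trans hαβ hβγ hr.c1On
  c1On_flux := hl.c1On_flux.trans hαβ hβγ hr.c1On_flux

lemma EigenODEOn.comp_const_sub (h : EigenODEOn p a b lam α γ u u') (c : ℝ) :
    EigenODEOn p b a lam (c - γ) (c - α) (fun t => u (c - t)) fun t => -u' (c - t) where
  c1On := h.c1On.comp_const_sub c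
  c1On_flux := by
    simpa only [asymFlux_neg, neg_neg] using (h.c1On_flux.comp_const_sub c).neg

lemma EigenODEOn.const_mul (h : EigenODEOn p a b lam α γ u u') (hu : ∀ t ∈ Icc α γ, 0 ≤ u t)
    {c : ℝ} (hc : 0 ≤ c) :
    EigenODEOn p a b lam α γ (fun t => c * u t) fun t => c * u' t where
  c1On := h.c1On.const_mul c
  c1On_flux := by
    refine (h.c1On_flux.const_mul (c ^ (p - 1))).congr
      (fun t _ => asymFlux_mul p a b hc (u' t)) fun t ht => ?_
    simp only [Real.mul_rpow hc (hu t ht)]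
    ring

end EigenODE

section RisingArc

variable {p a b lam l : ℝ} {u u' : ℝ → ℝ}

/-- `u` rises from `0` to its maximum `1` along `[0, l]`, where it solves the eigenvalue equation:
the quarter wave out of which positive eigenfunctions are assembled. -/
structure IsRisingArc (p a b lam l : ℝ) (u u' : ℝ → ℝ) : Prop
    extends EigenODEOn p a b lam 0 l u u' where
  length_pos : 0 < l
  left_eq : u 0 = 0
  top_eq : u l = 1
  slope_left_pos : 0 < u' 0
  slope_top_eq : u' l = 0
  pos : ∀ t ∈ Ioc 0 l, 0 < u t
  slope_nonneg : ∀ t ∈ Icc 0 l, 0 ≤ u' t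

lemma asymFlux_div_of_nonneg (hp : p ≠ 1) (hp0 : p ≠ 0) (b : ℝ) (ha : 0 < a) {k : ℝ} (hk : 0 < k)
    {s : ℝ} (hs : 0 ≤ s) :
    asymFlux p a b (s / (a * k)) = a / k ^ (p - 1) * asymFlux p 1 1 s := by
  rw [asymFlux_of_nonneg hp _ _ (by positivity), asymFlux_of_nonneg hp _ _ hs,
    Real.div_rpow hs (by positivity), Real.mul_rpow ha.le hk.le,
    ← rpow_sub_one_mul_self hp0 ha.le, Real.one_rpow]
  field_simp

lemma IsRisingArc.rescale (hp : p ≠ 1) (hp0 : p ≠ 0) (h : IsRisingArc p 1 1 lam l u u') (b : ℝ)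
    (ha : 0 < a) {k : ℝ} (hk : 0 < k) :
    IsRisingArc p a b (lam / k ^ p) (l * (a * k)) (fun t => u (t / (a * k)))
      fun t => u' (t / (a * k)) / (a * k) where
  c1On := by simpa only [zero_mul] using h.c1On.comp_div (mul_pos ha hk)
  c1On_flux := by
    have scaled := (h.c1On_flux.comp_div (mul_pos ha hk)).const_mul (a / k ^ (p - 1))
    rw [zero_mul] at scaled
    have maps : ∀ t ∈ Icc 0 (l * (a * k)), t / (a * k) ∈ Icc 0 l := fun t ht =>
      ⟨div_nonneg ht.1 (by positivity), (div_le_iff₀ (by positivity)).2 ht.2⟩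
    refine scaled.congr
      (fun t ht => asymFlux_div_of_nonneg hp hp0 b ha hk (h.slope_nonneg _ (maps t ht)))
      fun t _ => ?_
    simp only [← rpow_sub_one_mul_self hp0 hk.le]
    field_simp
  length_pos := mul_pos h.length_pos (mul_pos ha hk)
  left_eq := by rw [zero_div, h.left_eq]
  top_eq := by rw [mul_div_cancel_right₀ _ (mul_pos ha hk).ne', h.top_eq]
  slope_left_pos := by
    rw [zero_div]
    exact div_pos h.slope_left_pos (mul_pos ha hk)
  slope_top_eq := by rw [mul_div_cancel_right₀ _ (mul_pos ha hk).ne', h.slope_top_eq, zero_div]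
  pos t ht := h.pos _ ⟨div_pos ht.1 (mul_pos ha hk), (div_le_iff₀ (mul_pos ha hk)).2 ht.2⟩
  slope_nonneg t ht := div_nonneg
    (h.slope_nonneg _ ⟨div_nonneg ht.1 (mul_pos ha hk).le, (div_le_iff₀ (mul_pos ha hk)).2 ht.2⟩)
    (mul_pos ha hk).le

end RisingArc

section Primitive

variable {f : ℝ → ℝ} {c : ℝ}

lemma mul_sub_le_integral (hf : ∀ x y, IntervalIntegrable f volume x y) (hcf : ∀ s, c ≤ f s)
    {x y : ℝ} (hxy : x ≤ y) : c * (y - x) ≤ ∫ s in x..y, f s := by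
  simpa [mul_comm] using
    intervalIntegral.integral_mono_on hxy intervalIntegrable_const (hf x y) fun s _ => hcf s

lemma strictMono_primitive (hf : ∀ x y, IntervalIntegrable f volume x y) (hc : 0 < c)
    (hcf : ∀ s, c ≤ f s) : StrictMono fun y => ∫ s in (0 : ℝ)..y, f s := by
  intro x y hxy
  have increment : 0 < ∫ s in x..y, f s :=
    (mul_pos hc (sub_pos.2 hxy)).trans_le (mul_sub_le_integral hf hcf hxy.le)
  have := intervalIntegral.integral_add_adjacent_intervals (hf 0 x) (hf x y)
  beta_reduce
  linarith

lemma surjective_primitive (hf : ∀ x y, IntervalIntegrable f volume x y) (hc : 0 < c)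
    (hcf : ∀ s, c ≤ f s) : Function.Surjective fun y => ∫ s in (0 : ℝ)..y, f s := by
  refine (intervalIntegral.continuous_primitive hf 0).surjective ?_ ?_
  · refine tendsto_atTop_mono' _ ?_ (tendsto_id.const_mul_atTop hc)
    filter_upwards [eventually_ge_atTop 0] with y hy
    simpa using mul_sub_le_integral hf hcf hy
  · refine tendsto_atBot_mono' _ ?_ (tendsto_id.const_mul_atBot hc)
    filter_upwards [eventually_le_atBot 0] with y hy
    have := mul_sub_le_integral hf hcf hy
    rw [intervalIntegral.integral_symm]
    simp only [id]
    linarith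

/-- The primitive vanishing at `0` of a locally integrable function bounded below by a positive
constant, as an order automorphism of `ℝ`; its inverse solves the autonomous equation
`S' = 1 / f S` wherever `f` is continuous. -/
noncomputable def primitiveOrderIso (hf : ∀ x y, IntervalIntegrable f volume x y) (hc : 0 < c)
    (hcf : ∀ s, c ≤ f s) : ℝ ≃o ℝ :=
  (strictMono_primitive hf hc hcf).orderIsoOfSurjective _ (surjective_primitive hf hc hcf)

lemma hasDerivAt_primitiveOrderIso_symm (hf : ∀ x y, IntervalIntegrable f volume x y)
    (hc : 0 < c) (hcf : ∀ s, c ≤ f s) {x : ℝ}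
    (hfx : ContinuousAt f ((primitiveOrderIso hf hc hcf).symm x)) :
    HasDerivAt (primitiveOrderIso hf hc hcf).symm
      (f ((primitiveOrderIso hf hc hcf).symm x))⁻¹ x := by
  set e := primitiveOrderIso hf hc hcf
  have meas : StronglyMeasurableAtFilter f (𝓝 (e.symm x)) :=
    ⟨Ioc (e.symm x - 1) (e.symm x + 1), Ioc_mem_nhds (by linarith) (by linarith),
      (hf _ _).aestronglyMeasurable⟩
  have deriv_e : HasDerivAt e (f (e.symm x)) (e.symm x) :=
    intervalIntegral.integral_hasDerivAt_right (hf 0 _) meas hfx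
  exact deriv_e.of_local_left_inverse e.symm.continuous.continuousAt (hc.trans_le (hcf _)).ne'
    (Eventually.of_forall e.apply_symm_apply)

end Primitive

section GeneralizedSine

variable {p : ℝ}

/-- The density `(1 - s ^ p) ^ (-1 / p)` of the generalized arcsine on `(0, 1)`, extended by `1`
so that it is locally integrable and bounded below by `1` on the whole line. -/
noncomputable def arcsinDensity (p : ℝ) : ℝ → ℝ :=
  (Ioo (0 : ℝ) 1).piecewise (fun s => (1 - s ^ p) ^ (-(1 / p))) fun _ => 1

lemma one_sub_le_one_sub_rpow {s : ℝ} (hp : 1 ≤ p) (hs : s ∈ Icc (0 : ℝ) 1) :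
    1 - s ≤ 1 - s ^ p := by
  have := Real.rpow_le_rpow_of_exponent_ge' hs.1 hs.2 zero_le_one hp
  rw [Real.rpow_one] at this
  linarith

lemma one_le_arcsinDensity (hp : 1 ≤ p) (s : ℝ) : 1 ≤ arcsinDensity p s := by
  rw [arcsinDensity]
  by_cases hs : s ∈ Ioo (0 : ℝ) 1
  · rw [piecewise_eq_of_mem _ _ _ hs]
    refine Real.one_le_rpow_of_pos_of_le_one_of_nonpos ?_ ?_ (neg_nonpos.2 (by positivity))
    · exact (sub_pos.2 hs.2).trans_le (one_sub_le_one_sub_rpow hp ⟨hs.1.le, hs.2.le⟩)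
    · linarith [Real.rpow_nonneg hs.1.le p]
  · rw [piecewise_eq_of_notMem _ _ _ hs]

lemma arcsinDensity_le (hp : 1 ≤ p) (s : ℝ) :
    arcsinDensity p s ≤ 1 + ‖(1 - s) ^ (-(1 / p))‖ := by
  rw [arcsinDensity]
  by_cases hs : s ∈ Ioo (0 : ℝ) 1
  · rw [piecewise_eq_of_mem _ _ _ hs]
    have := Real.rpow_le_rpow_of_nonpos (z := -(1 / p)) (sub_pos.2 hs.2)
      (one_sub_le_one_sub_rpow hp ⟨hs.1.le, hs.2.le⟩) (neg_nonpos.2 (by positivity))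
    linarith [Real.le_norm_self ((1 - s) ^ (-(1 / p)))]
  · rw [piecewise_eq_of_notMem _ _ _ hs]
    linarith [norm_nonneg ((1 - s) ^ (-(1 / p)))]

lemma intervalIntegrable_arcsinDensity (hp : 1 < p) (x y : ℝ) :
    IntervalIntegrable (arcsinDensity p) volume x y := by
  have exponent : -1 < -(1 / p) := by
    rw [neg_lt_neg_iff, div_lt_one (by linarith)]
    exact hp
  have majorant : IntervalIntegrable (fun s : ℝ => 1 + ‖(1 - s) ^ (-(1 / p))‖) volume x y := by
    have := (intervalIntegral.intervalIntegrable_rpow' exponent (a := 1 - x)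
      (b := 1 - y)).comp_sub_left 1
    simp only [sub_sub_cancel] at this
    exact intervalIntegrable_const.add this.norm
  have meas : Measurable (arcsinDensity p) :=
    Measurable.piecewise measurableSet_Ioo (by fun_prop) measurable_const
  refine majorant.mono_fun meas.aestronglyMeasurable (Eventually.of_forall fun s => ?_)
  beta_reduce
  rw [Real.norm_of_nonneg (zero_le_one.trans (one_le_arcsinDensity hp.le s))]
  exact (arcsinDensity_le hp.le s).trans (Real.le_norm_self _)

lemma continuousAt_arcsinDensity (hp : 1 ≤ p) {s : ℝ} (hs : s ∈ Ioo (0 : ℝ) 1) :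
    ContinuousAt (arcsinDensity p) s := by
  have base_ne : 1 - s ^ p ≠ 0 :=
    ((sub_pos.2 hs.2).trans_le (one_sub_le_one_sub_rpow hp ⟨hs.1.le, hs.2.le⟩)).ne'
  have : ContinuousAt (fun x : ℝ => (1 - x ^ p) ^ (-(1 / p))) s :=
    (continuousAt_const.sub (continuousAt_id.rpow_const (Or.inl hs.1.ne'))).rpow_const
      (Or.inl base_ne)
  refine this.congr ?_
  filter_upwards [isOpen_Ioo.mem_nhds hs] with x hx
  rw [arcsinDensity, piecewise_eq_of_mem _ _ _ hx]

/-- The generalized arcsine `y ↦ ∫₀^y (1 - s ^ p) ^ (-1 / p) ds`, continued with slope `1` outside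
`[0, 1]` to an order automorphism of `ℝ` whose inverse is the generalized sine. -/
noncomputable def genArcsin (hp : 1 < p) : ℝ ≃o ℝ :=
  primitiveOrderIso (intervalIntegrable_arcsinDensity hp) one_pos (one_le_arcsinDensity hp.le)

/-- The generalized cosine `(1 - S ^ p) ^ (1 / p)`, the derivative of the generalized sine `S` on
its rising quarter period. -/
noncomputable def genCos (hp : 1 < p) (x : ℝ) : ℝ :=
  (1 - (genArcsin hp).symm x ^ p) ^ (1 / p)

lemma genArcsin_zero (hp : 1 < p) : genArcsin hp 0 = 0 :=
  intervalIntegral.integral_same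

lemma genArcsin_symm_mem_Ioo (hp : 1 < p) {x : ℝ} (hx : x ∈ Ioo 0 (genArcsin hp 1)) :
    (genArcsin hp).symm x ∈ Ioo (0 : ℝ) 1 :=
  ⟨(genArcsin hp).lt_symm_apply.2 (by simpa only [genArcsin_zero] using hx.1),
    (genArcsin hp).symm_apply_lt.2 hx.2⟩

lemma one_sub_genArcsin_symm_rpow_pos (hp : 1 < p) {x : ℝ} (hx : x ∈ Ioo 0 (genArcsin hp 1)) :
    0 < 1 - (genArcsin hp).symm x ^ p :=
  have hS := genArcsin_symm_mem_Ioo hp hx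
  sub_pos.2 (Real.rpow_lt_one hS.1.le hS.2 (by linarith))

lemma continuous_genCos (hp : 1 < p) : Continuous (genCos hp) :=
  (continuous_const.sub ((genArcsin hp).symm.continuous.rpow_const
    fun _ => Or.inr (by linarith))).rpow_const fun _ => Or.inr (by positivity)

lemma hasDerivAt_genArcsin_symm (hp : 1 < p) {x : ℝ} (hx : x ∈ Ioo 0 (genArcsin hp 1)) :
    HasDerivAt (genArcsin hp).symm (genCos hp x) x := by
  have hS := genArcsin_symm_mem_Ioo hp hx
  have deriv := hasDerivAt_primitiveOrderIso_symm (intervalIntegrable_arcsinDensity hp) one_pos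
    (one_le_arcsinDensity hp.le) (continuousAt_arcsinDensity hp.le hS)
  change HasDerivAt (genArcsin hp).symm (arcsinDensity p ((genArcsin hp).symm x))⁻¹ x at deriv
  rwa [arcsinDensity, piecewise_eq_of_mem _ _ _ hS,
    Real.rpow_neg (one_sub_genArcsin_symm_rpow_pos hp hx).le, inv_inv] at deriv

lemma hasDerivAt_genCos_rpow (hp : 1 < p) {x : ℝ} (hx : x ∈ Ioo 0 (genArcsin hp 1)) :
    HasDerivAt (fun y => genCos hp y ^ (p - 1)) (-((p - 1) * (genArcsin hp).symm x ^ (p - 1)))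
      x := by
  set S := (genArcsin hp).symm
  have hp0 : p ≠ 0 := by linarith
  have base_pos := one_sub_genArcsin_symm_rpow_pos hp hx
  have deriv := (((hasDerivAt_genArcsin_symm hp hx).rpow_const (p := p)
    (Or.inl (genArcsin_symm_mem_Ioo hp hx).1.ne')).const_sub 1).rpow_const
      (p := (p - 1) / p) (Or.inl base_pos.ne')
  have cancel : genCos hp x * (1 - S x ^ p) ^ ((p - 1) / p - 1) = 1 := by
    rw [genCos, ← Real.rpow_add base_pos, show 1 / p + ((p - 1) / p - 1) = 0 by field_simp; ring,
      Real.rpow_zero]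
  have value : -(genCos hp x * p * S x ^ (p - 1)) * ((p - 1) / p) *
      (1 - S x ^ p) ^ ((p - 1) / p - 1) = -((p - 1) * S x ^ (p - 1)) := by
    calc _ = -((p - 1) * S x ^ (p - 1)) *
          (genCos hp x * (1 - S x ^ p) ^ ((p - 1) / p - 1)) := by field_simp
      _ = _ := by rw [cancel, mul_one]
  rw [value] at deriv
  refine deriv.congr_of_eventuallyEq ?_
  filter_upwards [isOpen_Ioo.mem_nhds hx] with y hy
  rw [genCos, ← Real.rpow_mul (one_sub_genArcsin_symm_rpow_pos hp hy).le]
  congr 1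
  ring

lemma isRisingArc_genArcsin_symm (hp : 1 < p) :
    IsRisingArc p 1 1 (p - 1) (genArcsin hp 1) (genArcsin hp).symm (genCos hp) := by
  have hp0 : p ≠ 0 := by linarith
  have length_pos : 0 < genArcsin hp 1 := by
    simpa only [genArcsin_zero] using (genArcsin hp).strictMono zero_lt_one
  have sin_zero : (genArcsin hp).symm 0 = 0 := by
    rw [OrderIso.symm_apply_eq, genArcsin_zero]
  have cos_zero : genCos hp 0 = 1 := by simp [genCos, sin_zero, hp0]
  have cos_top : genCos hp (genArcsin hp 1) = 0 := by simp [genCos, hp0]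
  have cos_nonneg : ∀ t ∈ Icc 0 (genArcsin hp 1), 0 ≤ genCos hp t := fun t ht => by
    have sin_nonneg : 0 ≤ (genArcsin hp).symm t :=
      (genArcsin hp).le_symm_apply.2 (by simpa only [genArcsin_zero] using ht.1)
    have sin_le_one : (genArcsin hp).symm t ≤ 1 := (genArcsin hp).symm_apply_le.2 ht.2
    exact Real.rpow_nonneg (sub_nonneg.2 (Real.rpow_le_one sin_nonneg sin_le_one (by linarith))) _
  have flux_eq : EqOn (fun t => asymFlux p 1 1 (genCos hp t)) (fun t => genCos hp t ^ (p - 1))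
      (Icc 0 (genArcsin hp 1)) := fun t ht => by
    simp [asymFlux_of_nonneg hp.ne' _ _ (cos_nonneg t ht)]
  have cont_sin := (genArcsin hp).symm.continuous
  have cont_cos := continuous_genCos hp
  refine ⟨⟨?_, ?_⟩, length_pos, sin_zero, (genArcsin hp).symm_apply_apply 1, by simp [cos_zero],
    cos_top, ?_, cos_nonneg⟩
  · exact c1On_of_hasDerivAt_Ioo length_pos.ne cont_sin.continuousOn cont_cos.continuousOn
      fun t => hasDerivAt_genArcsin_symm hp
  · refine (c1On_of_hasDerivAt_Ioo length_pos.ne ?_ ?_ fun t =>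
      hasDerivAt_genCos_rpow hp).congr flux_eq fun _ _ => rfl
    · exact (cont_cos.rpow_const fun _ => Or.inr (by linarith)).continuousOn
    · exact (continuous_const.mul (cont_sin.rpow_const
        fun _ => Or.inr (by linarith))).neg.continuousOn
  · intro t ht
    rw [OrderIso.lt_symm_apply, genArcsin_zero]
    exact ht.1

end GeneralizedSine

section PosEigenfunction

variable {p a b L lam : ℝ} {u u' : ℝ → ℝ}

/-- `u` is a classical Dirichlet eigenfunction on `[0, L]` which is positive inside and vanishes
transversally at both ends. -/
structure IsPosEigenfunction (p a b L lam : ℝ) (u u' : ℝ → ℝ) : Prop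
    extends EigenODEOn p a b lam 0 L u u' where
  left_eq : u 0 = 0
  right_eq : u L = 0
  pos : ∀ t ∈ Ioo 0 L, 0 < u t
  slope_left_pos : 0 < u' 0
  slope_right_neg : u' L < 0

lemma IsPosEigenfunction.adm (h : IsPosEigenfunction p a b L lam u u') : Adm L u u' :=
  ⟨h.c1On, h.left_eq, h.right_eq⟩

lemma IsPosEigenfunction.nonneg (h : IsPosEigenfunction p a b L lam u u') {t : ℝ}
    (ht : t ∈ Icc 0 L) : 0 ≤ u t := by
  rcases ht.1.eq_or_lt with rfl | h0
  · exact h.left_eq.ge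
  rcases ht.2.eq_or_lt with rfl | hL
  · exact h.right_eq.ge
  · exact (h.pos t ⟨h0, hL⟩).le

lemma IsPosEigenfunction.const_mul (h : IsPosEigenfunction p a b L lam u u') {c : ℝ}
    (hc : 0 < c) :
    IsPosEigenfunction p a b L lam (fun t => c * u t) fun t => c * u' t where
  toEigenODEOn := h.toEigenODEOn.const_mul (fun _ => h.nonneg) hc.le
  left_eq := by rw [h.left_eq, mul_zero]
  right_eq := by rw [h.right_eq, mul_zero]
  pos t ht := mul_pos hc (h.pos t ht)
  slope_left_pos := mul_pos hc h.slope_left_pos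
  slope_right_neg := mul_neg_of_pos_of_neg hc h.slope_right_neg

lemma IsPosEigenfunction.reflect (h : IsPosEigenfunction p a b L lam u u') :
    IsPosEigenfunction p b a L lam (fun t => u (L - t)) fun t => -u' (L - t) where
  toEigenODEOn := by simpa only [sub_self, sub_zero] using h.toEigenODEOn.comp_const_sub L
  left_eq := by rw [sub_zero, h.right_eq]
  right_eq := by rw [sub_self, h.left_eq]
  pos t ht := h.pos _ ⟨sub_pos.2 ht.2, sub_lt_self L ht.1⟩
  slope_left_pos := by simpa only [sub_zero, neg_pos] using h.slope_right_neg
  slope_right_neg := by simpa only [sub_self, neg_neg_iff_pos] using h.slope_left_pos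

lemma IsRisingArc.glue {l₁ l₂ : ℝ} {u₁ u₁' u₂ u₂' : ℝ → ℝ}
    (h₁ : IsRisingArc p a b lam l₁ u₁ u₁') (h₂ : IsRisingArc p b a lam l₂ u₂ u₂') :
    IsPosEigenfunction p a b (l₁ + l₂) lam
      (fun t => if t ≤ l₁ then u₁ t else u₂ (l₁ + l₂ - t))
      fun t => if t ≤ l₁ then u₁' t else -u₂' (l₁ + l₂ - t) := by
  have hl₁ := h₁.length_pos
  have hl₂ := h₂.length_pos
  have falling : EigenODEOn p a b lam l₁ (l₁ + l₂) (fun t => u₂ (l₁ + l₂ - t))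
      fun t => -u₂' (l₁ + l₂ - t) := by
    simpa only [add_sub_cancel_right, sub_zero] using
      h₂.toEigenODEOn.comp_const_sub (l₁ + l₂)
  have on_right : ∀ {g h : ℝ → ℝ}, g l₁ = h l₁ →
      EqOn (fun t => if t ≤ l₁ then g t else h t) h (Icc l₁ (l₁ + l₂)) := by
    intro g h hgh t ht
    rcases ht.1.eq_or_lt with rfl | hlt
    · simp only [le_refl, if_true, hgh]
    · simp only [hlt.not_ge, if_false]
  have not_le : ¬l₁ + l₂ ≤ l₁ := by linarith
  refine ⟨EigenODEOn.trans hl₁.le (by linarith)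
    (h₁.toEigenODEOn.congr (fun t ht => if_pos ht.2) fun t ht => if_pos ht.2)
    (falling.congr (on_right ?_) (on_right ?_)), ?_, ?_, ?_, ?_, ?_⟩
  · rw [add_sub_cancel_left, h₁.top_eq, h₂.top_eq]
  · rw [add_sub_cancel_left, h₁.slope_top_eq, h₂.slope_top_eq, neg_zero]
  · simp only [hl₁.le, if_true, h₁.left_eq]
  · simp only [not_le, if_false, sub_self, h₂.left_eq]
  · intro t ht
    by_cases htl : t ≤ l₁
    · simpa only [htl, if_true] using h₁.pos t ⟨ht.1, htl⟩
    · simpa only [htl, if_false] using h₂.pos _ ⟨by linarith [ht.2], by linarith⟩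
  · simpa only [hl₁.le, if_true] using h₁.slope_left_pos
  · simpa only [not_le, if_false, sub_self, neg_neg_iff_pos] using neg_neg_of_pos h₂.slope_left_pos

lemma exists_isPosEigenfunction (hp : 1 < p) (ha : 0 < a) (hb : 0 < b) (hL : 0 < L) :
    ∃ lam u u', IsPosEigenfunction p a b L lam u u' := by
  have sine := isRisingArc_genArcsin_symm hp
  have hp0 : p ≠ 0 := by linarith
  set T := genArcsin hp 1
  have hT : 0 < T := sine.length_pos
  have hk : 0 < L / ((a + b) * T) := by positivity
  have lengths : T * (a * (L / ((a + b) * T))) + T * (b * (L / ((a + b) * T))) = L := by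
    field_simp
  have glued := (sine.rescale hp.ne' hp0 b ha hk).glue (sine.rescale hp.ne' hp0 a hb hk)
  rw [lengths] at glued
  exact ⟨_, _, _, glued⟩

lemma IsPosEigenfunction.integral_flux_mul_deriv (hL : 0 ≤ L)
    (h : IsPosEigenfunction p a b L lam u u') {φ φ' : ℝ → ℝ} (hφ : Adm L φ φ') :
    ∫ t in (0 : ℝ)..L, asymFlux p a b (u' t) * φ' t =
      ∫ t in (0 : ℝ)..L, lam * u t ^ (p - 1) * φ t := by
  have parts := intervalIntegral.integral_mul_deriv_eq_deriv_mul_of_hasDerivWithinAt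
    (by simpa only [uIcc_of_le hL] using h.c1On_flux.1) (by simpa only [uIcc_of_le hL] using hφ.1.1)
    (h.c1On_flux.2.intervalIntegrable_of_Icc hL) (hφ.1.2.intervalIntegrable_of_Icc hL)
  rw [parts, hφ.2.1, hφ.2.2, mul_zero, mul_zero, sub_zero, zero_sub,
    ← intervalIntegral.integral_neg]
  simp only [neg_mul, neg_neg]

lemma IsPosEigenfunction.integral_asymE (hp : 1 < p) (hL : 0 ≤ L)
    (h : IsPosEigenfunction p a b L lam u u') :
    ∫ t in (0 : ℝ)..L, asymE p a b (u' t) = lam * ∫ t in (0 : ℝ)..L, |u t| ^ p := by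
  have weak := h.integral_flux_mul_deriv hL h.adm
  simp only [asymFlux_mul_self hp] at weak
  rw [weak, ← intervalIntegral.integral_const_mul]
  refine intervalIntegral.integral_congr fun t ht => ?_
  have hu := h.nonneg (uIcc_of_le hL ▸ ht)
  rw [mul_assoc, rpow_sub_one_mul_self (by linarith) hu, abs_of_nonneg hu]

end PosEigenfunction

section Picone

variable {p a b L lam : ℝ} {u u' v v' : ℝ → ℝ}

/-- Picone's field `J (v⁺) ^ p / u ^ (p - 1)`, where `J` is the flux of `u`, for comparing the
energy of `v⁺` with the eigenfunction `u`. It is written as `J u (v⁺ / u) ^ p`, which extends it by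
`0` to the zeros of `u`. -/
noncomputable def piconeField (p a b : ℝ) (u u' v : ℝ → ℝ) (t : ℝ) : ℝ :=
  asymFlux p a b (u' t) * (u t * max (v t / u t) 0 ^ p)

lemma piconeField_of_eq_zero {t : ℝ} (hu : u t = 0) (p a b : ℝ) (u' v : ℝ → ℝ) :
    piconeField p a b u u' v t = 0 := by
  rw [piconeField, hu, zero_mul, mul_zero]

lemma IsPosEigenfunction.hasDerivAt_piconeField (hp : 1 < p)
    (h : IsPosEigenfunction p a b L lam u u') (hv : C1On 0 L v v') {t : ℝ} (ht : t ∈ Ioo 0 L) :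
    HasDerivAt (piconeField p a b u u' v)
      (p * asymFlux p a b (max (v t / u t) 0 * u' t) * v' t
        - (p - 1) * asymE p a b (max (v t / u t) 0 * u' t) - lam * max (v t) 0 ^ p) t := by
  have hu := h.pos t ht
  set q := max (v t / u t) 0
  have hq : 0 ≤ q := le_max_right _ _
  have deriv_q : HasDerivAt (fun x => max (v x / u x) 0 ^ p)
      (p * q ^ (p - 1) * ((v' t * u t - v t * u' t) / u t ^ 2)) t :=
    (hasDerivAt_max_zero_rpow hp (v t / u t)).comp t
      (h := fun x => v x / u x) ((hv.hasDerivAt ht).div (h.c1On.hasDerivAt ht) hu.ne')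
  have u_mul_q : u t ^ (p - 1) * u t * q ^ p = max (v t) 0 ^ p := by
    rw [rpow_sub_one_mul_self (by linarith) hu.le, ← Real.mul_rpow hu.le hq,
      mul_max_of_nonneg _ _ hu.le, mul_div_cancel₀ _ hu.ne', mul_zero]
  have q_mul_self : q ^ (p - 1) * q = q ^ p := rpow_sub_one_mul_self (by linarith) hq
  have q_mul_div : q ^ (p - 1) * (v t / u t) = q ^ p := max_zero_rpow_sub_one_mul hp _
  have quotient : u t * ((v' t * u t - v t * u' t) / u t ^ 2) = v' t - v t / u t * u' t := by
    field_simp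
  refine ((h.c1On_flux.hasDerivAt ht).mul
    ((h.c1On.hasDerivAt ht).mul deriv_q)).congr_deriv ?_
  rw [← asymFlux_mul_self hp, asymFlux_mul p a b hq, ← u_mul_q]
  simp only [Pi.mul_apply]
  linear_combination p * asymFlux p a b (u' t) * q ^ (p - 1) * quotient
    - p * asymFlux p a b (u' t) * u' t * q_mul_div
    + (p - 1) * asymFlux p a b (u' t) * u' t * q_mul_self

lemma asymE_tangent_max_div_le (hp : 1 < p) (ha : 0 ≤ a) (hb : 0 ≤ b) {x : ℝ} (hx : 0 < x)
    (x' y y' : ℝ) :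
    p * asymFlux p a b (max (y / x) 0 * x') * y' - (p - 1) * asymE p a b (max (y / x) 0 * x') ≤
      if 0 < y then asymE p a b y' else 0 := by
  split_ifs with hy
  · exact asymE_tangent_le hp ha hb _ _
  · rw [max_eq_right (div_nonpos_of_nonpos_of_nonneg (not_lt.1 hy) hx.le), zero_mul,
      asymFlux_of_nonneg hp.ne' _ _ le_rfl, asymE_of_nonneg (by linarith) _ _ le_rfl,
      Real.zero_rpow (by linarith), Real.zero_rpow (by linarith)]
    simp

lemma asymE_tangent_max_div_add_le (hp : 1 < p) (ha : 0 ≤ a) (hb : 0 ≤ b) {x : ℝ} (hx : 0 < x)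
    (x' : ℝ) {z : ℝ} (hz : 0 < z) (z' y y' : ℝ) :
    (p * asymFlux p a b (max (y / x) 0 * x') * y' - (p - 1) * asymE p a b (max (y / x) 0 * x'))
      + (p * asymFlux p b a (max (-y / z) 0 * z') * -y'
        - (p - 1) * asymE p b a (max (-y / z) 0 * z')) ≤ asymE p a b y' := by
  have pos_part := asymE_tangent_max_div_le hp ha hb hx x' y y'
  have neg_part := asymE_tangent_max_div_le hp hb ha hz z' (-y) (-y')
  rw [asymE_neg] at neg_part
  have := asymE_nonneg p ha hb y'
  split_ifs at pos_part neg_part <;> linarith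

lemma tendsto_div_of_hasDerivWithinAt {f g : ℝ → ℝ} {f' g' x : ℝ} {s : Set ℝ}
    (hf : HasDerivWithinAt f f' s x) (hg : HasDerivWithinAt g g' s x) (hfx : f x = 0)
    (hgx : g x = 0) (hg' : g' ≠ 0) :
    Tendsto (fun t => f t / g t) (𝓝[s \ {x}] x) (𝓝 (f' / g')) := by
  refine ((hasDerivWithinAt_iff_tendsto_slope.1 hf).div
    (hasDerivWithinAt_iff_tendsto_slope.1 hg) hg').congr' ?_
  filter_upwards [self_mem_nhdsWithin] with t ht
  rw [Pi.div_apply, slope_def_field, slope_def_field, hfx, hgx, sub_zero, sub_zero,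
    div_div_div_cancel_right₀ (sub_ne_zero.2 ht.2)]

lemma continuousWithinAt_piconeField (hp : 1 ≤ p) {s : Set ℝ} {x : ℝ}
    (hu' : ContinuousWithinAt u' s x) (hu : HasDerivWithinAt u (u' x) s x)
    (hv : HasDerivWithinAt v (v' x) s x) (hux : u x = 0) (hvx : v x = 0) (hslope : u' x ≠ 0) :
    ContinuousWithinAt (piconeField p a b u u' v) s x := by
  rw [← continuousWithinAt_sdiff_self]
  have lim_flux : Tendsto (fun t => asymFlux p a b (u' t)) (𝓝[s \ {x}] x)
      (𝓝 (asymFlux p a b (u' x))) :=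
    ((continuous_asymFlux hp a b).tendsto _).comp (hu'.mono sdiff_subset)
  have lim_u : Tendsto u (𝓝[s \ {x}] x) (𝓝 0) :=
    hux ▸ hu.continuousWithinAt.mono sdiff_subset
  have lim_quotient := ((tendsto_div_of_hasDerivWithinAt hv hu hvx hux hslope).max
    (tendsto_const_nhds (x := (0 : ℝ)))).rpow_const (p := p) (Or.inr (by linarith))
  have lim := lim_flux.mul (lim_u.mul lim_quotient)
  rw [zero_mul, mul_zero] at lim
  rwa [ContinuousWithinAt, piconeField_of_eq_zero hux]

lemma IsPosEigenfunction.continuousOn_piconeField (hp : 1 < p)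
    (h : IsPosEigenfunction p a b L lam u u') (hv : Adm L v v') :
    ContinuousOn (piconeField p a b u u' v) (Icc 0 L) := by
  have at_zero : ∀ t ∈ Icc 0 L, u t = 0 → v t = 0 → u' t ≠ 0 →
      ContinuousWithinAt (piconeField p a b u u' v) (Icc 0 L) t := fun t ht =>
    continuousWithinAt_piconeField hp.le (h.c1On.2 t ht) (h.c1On.1 t ht) (hv.1.1 t ht)
  intro t ht
  rcases ht.1.eq_or_lt with rfl | h0
  · exact at_zero _ ht h.left_eq hv.2.1 h.slope_left_pos.ne'
  rcases ht.2.eq_or_lt with rfl | hL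
  · exact at_zero _ ht h.right_eq hv.2.2 h.slope_right_neg.ne
  · exact (h.hasDerivAt_piconeField hp hv.1 ⟨h0, hL⟩).continuousAt.continuousWithinAt

lemma IsPosEigenfunction.mul_integral_abs_rpow_le (hp : 1 < p) (ha : 0 ≤ a) (hb : 0 ≤ b)
    (hL : 0 ≤ L) (h : IsPosEigenfunction p a b L lam u u') (hv : Adm L v v') :
    lam * ∫ t in (0 : ℝ)..L, |v t| ^ p ≤ ∫ t in (0 : ℝ)..L, asymE p a b (v' t) := by
  have energy_cont : ContinuousOn (fun t => asymE p a b (v' t)) (Icc 0 L) :=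
    (continuous_asymE (by linarith) a b).comp_continuousOn hv.1.2
  have mass_cont : ContinuousOn (fun t => lam * |v t| ^ p) (Icc 0 L) :=
    continuousOn_const.mul (hv.1.continuousOn.abs.rpow_const fun _ _ => Or.inr (by linarith))
  set F := piconeField p a b u u' v
  set G := piconeField p b a (fun t => u (L - t)) (fun t => -u' (L - t)) fun t => -v t
  have ftc : (F L + G L) - (F 0 + G 0) ≤
      ∫ t in (0 : ℝ)..L, (asymE p a b (v' t) - lam * |v t| ^ p) := by
    refine intervalIntegral.sub_le_integral_of_hasDeriv_right_of_le hL
      ((h.continuousOn_piconeField hp hv).add (h.reflect.continuousOn_piconeField hp hv.neg))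
      (fun t ht => ((h.hasDerivAt_piconeField hp hv.1 ht).add
        (h.reflect.hasDerivAt_piconeField hp hv.neg.1 ht)).hasDerivWithinAt)
      (energy_cont.sub mass_cont).integrableOn_Icc fun t ht => ?_
    have tangents := asymE_tangent_max_div_add_le hp ha hb (h.pos t ht) (u' t) (h.reflect.pos t ht)
      (-u' (L - t)) (v t) (v' t)
    rw [abs_rpow_eq_max_add_max (by linarith)]
    linarith
  have F_left : F 0 = 0 := piconeField_of_eq_zero h.left_eq _ _ _ _ _
  have F_right : F L = 0 := piconeField_of_eq_zero h.right_eq _ _ _ _ _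
  have G_left : G 0 = 0 :=
    piconeField_of_eq_zero (u := fun t => u (L - t)) h.reflect.left_eq _ _ _ _ _
  have G_right : G L = 0 :=
    piconeField_of_eq_zero (u := fun t => u (L - t)) h.reflect.right_eq _ _ _ _ _
  rw [intervalIntegral.integral_sub (energy_cont.intervalIntegrable_of_Icc hL)
    (mass_cont.intervalIntegrable_of_Icc hL), intervalIntegral.integral_const_mul] at ftc
  linarith

end Picone

section FirstEigenvalue

variable {p a b L lam : ℝ} {u u' : ℝ → ℝ}

lemma exists_pos_integral_abs_mul_rpow_eq_one (hp : p ≠ 0) {α β : ℝ} {f : ℝ → ℝ}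
    (hf : 0 < ∫ t in α..β, |f t| ^ p) : ∃ c > 0, ∫ t in α..β, |c * f t| ^ p = 1 := by
  set I := ∫ t in α..β, |f t| ^ p
  have hc : 0 < (I ^ (1 / p))⁻¹ := inv_pos.2 (Real.rpow_pos_of_pos hf _)
  refine ⟨_, hc, ?_⟩
  simp_rw [abs_mul, abs_of_pos hc, Real.mul_rpow hc.le (abs_nonneg _)]
  rw [intervalIntegral.integral_const_mul, Real.inv_rpow (by positivity),
    ← Real.rpow_mul hf.le, one_div_mul_cancel hp, Real.rpow_one, inv_mul_cancel₀ hf.ne']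

lemma IsPosEigenfunction.integral_abs_rpow_pos (hp : 0 ≤ p) (hL : 0 < L)
    (h : IsPosEigenfunction p a b L lam u u') : 0 < ∫ t in (0 : ℝ)..L, |u t| ^ p := by
  have cont : ContinuousOn (fun t => |u t| ^ p) (Icc 0 L) :=
    h.c1On.continuousOn.abs.rpow_const fun _ _ => Or.inr hp
  exact intervalIntegral.intervalIntegral_pos_of_pos_on (cont.intervalIntegrable_of_Icc hL.le)
    (fun t ht => Real.rpow_pos_of_pos (abs_pos.2 (h.pos t ht).ne') p) hL

lemma IsPosEigenfunction.isWeakSol (hp : p ≠ 1) (hL : 0 ≤ L)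
    (h : IsPosEigenfunction p a b L lam u u') :
    IsWeakSol p a b L u u' fun t => lam * |u t| ^ (p - 2) * u t := by
  refine ⟨h.adm, fun φ φ' hφ => ?_⟩
  rw [h.integral_flux_mul_deriv hL hφ]
  refine intervalIntegral.integral_congr fun t ht => ?_
  have hu := h.nonneg (uIcc_of_le hL ▸ ht)
  have power : u t ^ (p - 2) * u t = u t ^ (p - 1) := by
    rw [← rpow_sub_one_mul_self (sub_ne_zero.2 hp) hu, sub_sub, one_add_one_eq_two]
  simp only [abs_of_nonneg hu, mul_assoc lam, power]

lemma IsPosEigenfunction.lam1_eq (hp : 1 < p) (ha : 0 ≤ a) (hb : 0 ≤ b) (hL : 0 ≤ L)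
    (h : IsPosEigenfunction p a b L lam u u') (hu : ∫ t in (0 : ℝ)..L, |u t| ^ p = 1) :
    lam1 p a b L = lam := by
  refine IsLeast.csInf_eq ⟨⟨u, u', h.adm, hu, ?_⟩, ?_⟩
  · rw [h.integral_asymE hp hL, hu, mul_one]
  · rintro _ ⟨v, v', hv, hvnorm, rfl⟩
    simpa only [hvnorm, mul_one] using h.mul_integral_abs_rpow_le hp ha hb hL hv

end FirstEigenvalue

theorem stmt1 (p a b L : ℝ) (hp : 1 < p) (ha : 0 < a) (hb : 0 < b) (hL : 0 < L) :
    ∃ u u' : ℝ → ℝ, Adm L u u' ∧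
      (∫ t in (0:ℝ)..L, |u t| ^ p) = 1 ∧
      (∫ t in (0:ℝ)..L, asymE p a b (u' t)) = lam1 p a b L ∧
      IsWeakSol p a b L u u' (fun t => lam1 p a b L * |u t| ^ (p - 2) * u t) := by
  obtain ⟨lam, w, w', hw⟩ := exists_isPosEigenfunction hp ha hb hL
  obtain ⟨c, hc, norm⟩ := exists_pos_integral_abs_mul_rpow_eq_one (by linarith)
    (hw.integral_abs_rpow_pos (by linarith) hL)
  have h := hw.const_mul hc
  rw [h.lam1_eq hp ha.le hb.le hL.le norm]
  refine ⟨_, _, h.adm, norm, ?_, h.isWeakSol hp.ne' hL.le⟩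
  rw [h.integral_asymE hp hL.le, norm, mul_one]
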